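/- Let ρ be a d-dimensional quantum state, let X_1,…,X_n be i.i.d. copies of the random Hermitian matrix X = (d+1)|v⟩⟨v| − I, where v ∈ S^d is distributed with density v ↦ d·⟨v|ρ|v⟩ with respect to the uniform probability measure on the unit sphere of ℂ^d, and fix a unit vector z ∈ ℂ^d. Then for every t ∈ [0,1], Pr[ |(1/n)·Σ_{i=1}^n ⟨z| X_i − E[X_i] |z⟩| ≥ t ] ≤ 2·exp(−n t² / 120). -/

import Mathlib

/-!
Write `W = (d+1)|⟨z, v⟩|²`, so that `⟨z|X|z⟩ = W - 1` and the deviation is that of the empirical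
mean of `W`. The proof bounds all moments of `W` under the Born distribution by `2 (k+1)!` and then
applies the Chernoff method.

The moments `m_k = E|v₀|^{2k}` of the uniform measure are obtained from unitary invariance alone.
Invariance gives `E|⟨u, v⟩|^{2K} = ‖u‖^{2K} m_K` for every vector `u` (`moment_dot`). Taking
`u = e₀ + ε c eᵢ` and comparing the coefficients of `ε²` yields
`(k+1) E[|v₀|^{2k}|vᵢ|²] = m_{k+1}` (`integral_pow_mul_coord`), and summation over `i` gives the
recursion `(d + k) m_{k+1} = (k + 1) m_k` (`moment_succ`); hence `d (d+1)^k m_{k+1} ≤ (k+1)!`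
(`moment_bound`).

For the Born distribution, factor `ρ = Bᴴ B`, so that its density is `d ∑ⱼ |⟨bⱼ, v⟩|²` with
`∑ⱼ ‖bⱼ‖² = 1`. The inequality `xᵏ y ≤ xᵏ⁺¹ + yᵏ⁺¹` then gives `E Wᵏ ≤ 2 (k+1)!`
(`born_moment_le`). Expanding the exponential, `E exp(r (W - E W)) ≤ exp(16 r²)` for `|r| ≤ 1/4`
(`centered_mgf_le`), and the choice `r = ± t/32` bounds each tail by `exp(-n t²/64)`.
-/

open MeasureTheory Matrix Finset
open scoped BigOperators Kronecker ComplexOrder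

noncomputable section

/-- The rank-one projector `|v⟩⟨v|`. -/
def projOp {ι : Type*} (v : ι → ℂ) : Matrix ι ι ℂ :=
  Matrix.vecMulVec v (star v)

/-- `μ` is the uniform (Haar-induced) probability measure on the unit sphere of `ℂ^d`:
it is a probability measure carried by the unit sphere that is invariant under every
unitary transformation.  (These properties determine it uniquely.) -/
def IsUniformSphereMeasure {d : ℕ} (μ : Measure (Fin d → ℂ)) : Prop :=
  IsProbabilityMeasure μ ∧
    μ {v | star v ⬝ᵥ v ≠ 1} = 0 ∧
    ∀ U : Matrix (Fin d) (Fin d) ℂ, U ∈ unitary (Matrix (Fin d) (Fin d) ℂ) →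
      Measure.map U.mulVec μ = μ

/-- The outcome distribution of the uniform POVM `{d |v⟩⟨v| dv}` on the state `ρ`:
the measure with density `v ↦ d ⟨v|ρ|v⟩` with respect to the uniform sphere measure. -/
def uniformBorn {d : ℕ} (μ : Measure (Fin d → ℂ)) (ρ : Matrix (Fin d) (Fin d) ℂ) :
    Measure (Fin d → ℂ) :=
  μ.withDensity fun v => ENNReal.ofReal ((d : ℝ) * (star v ⬝ᵥ ρ.mulVec v).re)

/-- The single-sample least-squares random matrix `X = (d+1)|v⟩⟨v| − I` for the
uniform POVM. -/
def uniformX {d : ℕ} (v : Fin d → ℂ) : Matrix (Fin d) (Fin d) ℂ :=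
  ((d : ℂ) + 1) • projOp v - 1

/-! ### Coefficient extraction under the integral -/

/-- The coefficients of degree at most two of `(A + B X + C X²) ^ K`. In degree two the truncated
exponent `K - 2` is harmless because `K.choose 2 = 0` for `K < 2`. -/
lemma coeff_two_pow (A B C : ℝ) (K : ℕ) :
    let P : Polynomial ℝ := Polynomial.C A + Polynomial.C B * Polynomial.X +
      Polynomial.C C * Polynomial.X ^ 2
    (P ^ K).coeff 0 = A ^ K ∧ (P ^ K).coeff 1 = K * A ^ (K - 1) * B ∧
    (P ^ K).coeff 2 = K * A ^ (K - 1) * C + (K.choose 2) * A ^ (K - 2) * B ^ 2 := by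
  intro P
  have h0 : P.coeff 0 = A := by simp [P]
  have h1 : P.coeff 1 = B := by simp [P, Polynomial.coeff_C]
  have h2 : P.coeff 2 = C := by simp [P]
  induction K with
  | zero => simp [Polynomial.coeff_one]
  | succ K ih =>
    obtain ⟨i0, i1, i2⟩ := ih
    refine ⟨?_, ?_, ?_⟩
    · rw [pow_succ, Polynomial.mul_coeff_zero, i0, h0]; ring
    · rw [pow_succ, Polynomial.coeff_mul, Finset.Nat.antidiagonal_succ]
      simp [i0, i1, h0, h1]
      rcases K with _ | K
      · simp
      · simp; ring
    · rw [pow_succ, Polynomial.coeff_mul]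
      rw [show antidiagonal 2 = {(0, 2), (1, 1), (2, 0)} from rfl]
      simp [i0, i1, i2, h0, h1, h2]
      rw [Nat.choose_succ_succ' K 1]
      rcases K with _ | _ | K
      · simp
      · simp; ring
      · simp; ring

lemma continuous_coeff_pow {V : Type*} [TopologicalSpace V] {P : V → Polynomial ℝ}
    (hP : ∀ j, Continuous fun v => (P v).coeff j) (K j : ℕ) :
    Continuous fun v => (P v ^ K).coeff j := by
  induction K generalizing j with
  | zero => simpa using continuous_const
  | succ K ih =>
    simp only [pow_succ, Polynomial.coeff_mul]
    exact continuous_finsetSum _ fun x _ => (ih _).mul (hP _)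

/-- Comparison of the `ε²` coefficients in `∫ (A + B ε + C ε²) ^ K = (1 + ε²) ^ K * m`: both sides
are polynomials in `ε` that agree at every real point. -/
lemma integral_coeff_two {V : Type*} [TopologicalSpace V] [MeasurableSpace V] (μ : Measure V)
    (hint : ∀ f : V → ℝ, Continuous f → Integrable f μ)
    {A B C : V → ℝ} (hA : Continuous A) (hB : Continuous B) (hC : Continuous C)
    (K : ℕ) (m : ℝ)
    (h : ∀ ε : ℝ, ∫ v, (A v + B v * ε + C v * ε ^ 2) ^ K ∂μ = (1 + ε ^ 2) ^ K * m) :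
    K * ∫ v, A v ^ (K - 1) * C v ∂μ + (K.choose 2) * ∫ v, A v ^ (K - 2) * B v ^ 2 ∂μ
      = K * m := by
  let P : V → Polynomial ℝ := fun v => Polynomial.C (A v) + Polynomial.C (B v) * Polynomial.X +
      Polynomial.C (C v) * Polynomial.X ^ 2
  have hP : ∀ j, Continuous fun v => (P v).coeff j := by
    intro j
    simp only [P, Polynomial.coeff_add, Polynomial.coeff_C, Polynomial.coeff_C_mul]
    refine (Continuous.add ?_ (hB.mul_const _)).add (hC.mul_const _)
    split_ifs
    · exact hA
    · exact continuous_const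
  have hdeg : ∀ v, (P v ^ K).natDegree < K * 2 + 1 := by
    intro v
    refine Nat.lt_succ_of_le (Polynomial.natDegree_pow_le_of_le K ?_)
    simp only [P]
    compute_degree
  let Q : Polynomial ℝ := ∑ j ∈ range (K * 2 + 1),
    Polynomial.C (∫ v, (P v ^ K).coeff j ∂μ) * Polynomial.X ^ j
  have hQ : Q = (Polynomial.C 1 + Polynomial.C 0 * Polynomial.X +
      Polynomial.C 1 * Polynomial.X ^ 2) ^ K * Polynomial.C m := by
    refine Polynomial.funext fun ε => ?_
    have : ∀ v, (A v + B v * ε + C v * ε ^ 2) ^ K =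
        ∑ j ∈ range (K * 2 + 1), (P v ^ K).coeff j * ε ^ j := by
      intro v
      rw [← Polynomial.eval_eq_sum_range' (hdeg v)]
      simp [P]
    have h2 := h ε
    simp_rw [this] at h2
    rw [integral_finsetSum] at h2
    · simp only [integral_mul_const] at h2
      simp [Q, Polynomial.eval_finsetSum, h2]
    · intro j _
      exact (hint _ (continuous_coeff_pow hP K j)).mul_const _
  have h2 := congrArg (fun q => Polynomial.coeff q 2) hQ
  simp only [Polynomial.coeff_mul_C] at h2
  rw [(coeff_two_pow 1 0 1 K).2.2] at h2
  rcases Nat.eq_zero_or_pos K with rfl | hK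
  · simp
  have h3 : Q.coeff 2 = ∫ v, (P v ^ K).coeff 2 ∂μ := by
    simp only [Q, Polynomial.finsetSum_coeff, Polynomial.coeff_C_mul, Polynomial.coeff_X_pow]
    rw [Finset.sum_eq_single 2]
    · simp
    · intro b _ hb; simp [hb.symm]
    · intro hb; simp at hb; omega
  rw [h3] at h2
  have h4 : ∀ v, (P v ^ K).coeff 2 = K * (A v ^ (K - 1) * C v)
      + (K.choose 2) * (A v ^ (K - 2) * B v ^ 2) := by
    intro v
    rw [(coeff_two_pow (A v) (B v) (C v) K).2.2]; ring
  simp_rw [h4] at h2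
  rw [integral_add, integral_const_mul, integral_const_mul] at h2
  · rw [h2]; simp
  · exact (hint _ (by fun_prop)).const_mul _
  · exact (hint _ (by fun_prop)).const_mul _

/-! ### Moments of the uniform measure on the sphere -/

lemma ae_sphere {d : ℕ} {μ : Measure (Fin d → ℂ)} (hμ : IsUniformSphereMeasure μ) :
    ∀ᵐ v ∂μ, star v ⬝ᵥ v = 1 := by
  rw [ae_iff]; exact hμ.2.1

lemma dot_self {d : ℕ} (v : Fin d → ℂ) :
    star v ⬝ᵥ v = ((∑ i, Complex.normSq (v i) : ℝ) : ℂ) := by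
  simp [dotProduct, Complex.normSq_eq_conj_mul_self]

/-- Continuous functions are integrable because the measure lives on the compact unit sphere. -/
lemma integrable_of_continuous {d : ℕ} {μ : Measure (Fin d → ℂ)}
    (hμ : IsUniformSphereMeasure μ) (f : (Fin d → ℂ) → ℝ) (hf : Continuous f) :
    Integrable f μ := by
  have := hμ.1
  let S : Set (Fin d → ℂ) := {v | star v ⬝ᵥ v = 1}
  have hS : IsCompact S := by
    refine Metric.isCompact_of_isClosed_isBounded ?_ ?_
    · exact isClosed_eq (by fun_prop) continuous_const
    · refine (Metric.isBounded_iff_subset_closedBall 0).2 ⟨1, ?_⟩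
      intro v hv
      rw [mem_closedBall_zero_iff, pi_norm_le_iff_of_nonneg zero_le_one]
      intro i
      have h1 : star v ⬝ᵥ v = 1 := hv
      rw [dot_self] at h1
      have h2 : ∑ i, Complex.normSq (v i) = 1 := by exact_mod_cast h1
      have h3 : Complex.normSq (v i) ≤ 1 := h2 ▸
        Finset.single_le_sum (fun j _ => Complex.normSq_nonneg (v j)) (Finset.mem_univ i)
      rw [Complex.normSq_eq_norm_sq] at h3
      exact (sq_le_one_iff₀ (norm_nonneg _)).1 h3
  have := hf.continuousOn.integrableOn_compact (μ := μ) hS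
  rwa [IntegrableOn, Measure.restrict_eq_self_of_ae_mem (s := S) (ae_sphere hμ)] at this

/-- Any unit vector `u` can be completed to a unitary matrix whose row `i₀` is the conjugate
of `u`. -/
lemma exists_unitary_row {d : ℕ} (i₀ : Fin d) (u : Fin d → ℂ) (hu : star u ⬝ᵥ u = 1) :
    ∃ U ∈ unitary (Matrix (Fin d) (Fin d) ℂ), ∀ v, (U.mulVec v) i₀ = star u ⬝ᵥ v := by
  have hn : Orthonormal ℂ (({i₀} : Set (Fin d)).domRestrict
      fun _ => (WithLp.toLp 2 u : EuclideanSpace ℂ (Fin d))) := by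
    refine ⟨fun i => ?_, fun i j hij => absurd (Subsingleton.elim i j) hij⟩
    have h : ‖(WithLp.toLp 2 u : EuclideanSpace ℂ (Fin d))‖ ^ 2 = 1 := by
      rw [EuclideanSpace.norm_sq_eq]
      rw [dot_self] at hu
      simp only [Complex.normSq_eq_norm_sq] at hu
      exact_mod_cast hu
    simpa using (pow_eq_one_iff_of_nonneg (norm_nonneg _) two_ne_zero).1 h
  obtain ⟨b, hb⟩ := hn.exists_orthonormalBasis_extension_of_card_eq (by simp)
  refine ⟨Matrix.of fun i j => star (b i j), ?_, ?_⟩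
  · refine Matrix.mem_unitaryGroup_iff.2 ?_
    ext i j
    have := orthonormal_iff_ite.1 b.orthonormal i j
    rw [PiLp.inner_apply] at this
    simp only [RCLike.inner_apply] at this
    rw [Matrix.mul_apply, Matrix.one_apply, ← this]
    exact Finset.sum_congr rfl fun k _ => by simp [mul_comm]
  · intro v
    have := hb i₀ rfl
    simp [Matrix.mulVec, dotProduct, this]

/-- Unitary invariance: the moments of `|⟨u, v⟩|²` depend on `u` only through its norm. -/
lemma moment_dot {d : ℕ} {μ : Measure (Fin d → ℂ)} (hμ : IsUniformSphereMeasure μ)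
    (i₀ : Fin d) (K : ℕ) (u : Fin d → ℂ) :
    ∫ v, Complex.normSq (star u ⬝ᵥ v) ^ K ∂μ =
      (∑ i, Complex.normSq (u i)) ^ K * ∫ v, Complex.normSq (v i₀) ^ K ∂μ := by
  have unit : ∀ w : Fin d → ℂ, star w ⬝ᵥ w = 1 →
      ∫ v, Complex.normSq (star w ⬝ᵥ v) ^ K ∂μ = ∫ v, Complex.normSq (v i₀) ^ K ∂μ := by
    intro w hw
    obtain ⟨U, hU, hr⟩ := exists_unitary_row i₀ w hw
    have hc : Continuous fun v : Fin d → ℂ => Complex.normSq (v i₀) ^ K :=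
      (Complex.continuous_normSq.comp (continuous_apply i₀)).pow K
    conv_rhs => rw [← hμ.2.2 U hU]
    rw [integral_map (by fun_prop) hc.aestronglyMeasurable]
    simp [hr]
  have := hμ.1
  set N := ∑ i, Complex.normSq (u i) with hN
  have hN0 : 0 ≤ N := Finset.sum_nonneg fun i _ => Complex.normSq_nonneg _
  rcases hN0.eq_or_lt with h0 | hpos
  · have hu : u = 0 := by
      funext i
      have := (Finset.sum_eq_zero_iff_of_nonneg
        (fun i _ => Complex.normSq_nonneg (u i))).1 (hN.symm.trans h0.symm) i (Finset.mem_univ i)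
      simpa using this
    rw [← h0, hu]
    rcases K with _ | K
    · simp
    · simp
  · have hs : (Real.sqrt N) ≠ 0 := (Real.sqrt_pos.2 hpos).ne'
    have hss : Real.sqrt N * Real.sqrt N = N := Real.mul_self_sqrt hN0
    let w : Fin d → ℂ := ((Real.sqrt N)⁻¹ : ℂ) • u
    have hw : star w ⬝ᵥ w = 1 := by
      rw [dot_self]
      have : ∑ i, Complex.normSq (w i) = 1 := by
        simp only [w, Pi.smul_apply, smul_eq_mul, Complex.normSq_mul, ← Finset.mul_sum, ← hN]
        rw [Complex.normSq_inv, Complex.normSq_ofReal, hss, inv_mul_cancel₀ hpos.ne']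
      rw [this]; simp
    have huw : u = ((Real.sqrt N) : ℂ) • w := by
      have : (Real.sqrt N : ℂ) ≠ 0 := by exact_mod_cast hs
      simp [w, smul_smul, this]
    have : ∀ v, Complex.normSq (star u ⬝ᵥ v) = N * Complex.normSq (star w ⬝ᵥ v) := by
      intro v
      rw [huw, star_smul, smul_dotProduct]
      simp [hss]
    simp_rw [this, mul_pow]
    rw [integral_const_mul, unit w hw]

/-- The mixed moment `E[|v₀|^{2k} |vᵢ|²] = E[|v₀|^{2(k+1)}] / (k+1)`. It follows by comparing the
`ε²` coefficients of `E|⟨e₀ + ε c eᵢ, v⟩|^{2(k+1)} = (1 + ε²)^{k+1} E|v₀|^{2(k+1)}` for the two phases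
`c = 1` and `c = i`, whose cross terms satisfy `Re(w)² + Im(w)² = |v₀|² |vᵢ|²`. -/
lemma integral_pow_mul_coord {d : ℕ} {μ : Measure (Fin d → ℂ)} (hμ : IsUniformSphereMeasure μ)
    {i₀ i : Fin d} (hi : i ≠ i₀) (k : ℕ) :
    (k + 1) * ∫ v, Complex.normSq (v i₀) ^ k * Complex.normSq (v i) ∂μ =
      ∫ v, Complex.normSq (v i₀) ^ (k + 1) ∂μ := by
  have hint := integrable_of_continuous hμ
  have hc : ∀ j : Fin d, Continuous fun v : Fin d → ℂ => Complex.normSq (v j) := fun j =>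
    Complex.continuous_normSq.comp (continuous_apply j)
  have key : ∀ c : ℂ, Complex.normSq c = 1 → ∀ ε : ℝ,
      ∫ v, (Complex.normSq (v i₀) + 2 * (c * v i₀ * star (v i)).re * ε +
        Complex.normSq (v i) * ε ^ 2) ^ (k + 1) ∂μ =
      (1 + ε ^ 2) ^ (k + 1) * ∫ v, Complex.normSq (v i₀) ^ (k + 1) ∂μ := by
    intro c hcc ε
    have h := moment_dot hμ i₀ (k + 1) (Pi.single i₀ 1 + Pi.single i (ε * c))
    have h1 : ∑ j, Complex.normSq ((Pi.single i₀ 1 + Pi.single i (ε * c) : Fin d → ℂ) j) =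
        1 + ε ^ 2 := by
      rw [Fintype.sum_eq_add i₀ i hi.symm]
      · simp [hi, hi.symm, hcc, sq]
      · intro x hx
        simp [hx.1, hx.2]
    rw [h1] at h
    rw [← h]
    refine integral_congr_ae (Filter.Eventually.of_forall fun v => ?_)
    have h2 : star (Pi.single i₀ 1 + Pi.single i (ε * c) : Fin d → ℂ) ⬝ᵥ v =
        v i₀ + ε * star c * v i := by
      rw [star_add, add_dotProduct, Pi.star_single, Pi.star_single]
      simp
    simp only [h2]
    congr 1
    rw [Complex.normSq_add]
    simp only [map_mul, Complex.normSq_ofReal, Complex.star_def,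
      Complex.normSq_conj, hcc, Complex.conj_conj, Complex.conj_ofReal]
    simp
    ring
  have h1 := integral_coeff_two μ hint (hc i₀) (by fun_prop) (hc i) (k + 1) _ (key 1 (by simp))
  have h2 := integral_coeff_two μ hint (hc i₀) (by fun_prop) (hc i) (k + 1) _
    (key Complex.I (by simp))
  have h3 : ((k + 1).choose 2 : ℝ) *
        ∫ v, Complex.normSq (v i₀) ^ (k + 1 - 2) * (2 * (1 * v i₀ * star (v i)).re) ^ 2 ∂μ +
      ((k + 1).choose 2 : ℝ) * ∫ v, Complex.normSq (v i₀) ^ (k + 1 - 2) *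
        (2 * (Complex.I * v i₀ * star (v i)).re) ^ 2 ∂μ =
      2 * (k * (k + 1)) * ∫ v, Complex.normSq (v i₀) ^ k * Complex.normSq (v i) ∂μ := by
    rcases k with _ | k
    · simp
    rw [← mul_add, ← integral_add (hint _ (by have := hc i₀; fun_prop))
      (hint _ (by have := hc i₀; fun_prop))]
    have : ∀ v : Fin d → ℂ, Complex.normSq (v i₀) ^ (k + 1 + 1 - 2) *
        (2 * (1 * v i₀ * star (v i)).re) ^ 2 + Complex.normSq (v i₀) ^ (k + 1 + 1 - 2) *
        (2 * (Complex.I * v i₀ * star (v i)).re) ^ 2 =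
        4 * (Complex.normSq (v i₀) ^ (k + 1) * Complex.normSq (v i)) := by
      intro v
      rw [show k + 1 + 1 - 2 = k by omega, pow_succ]
      simp [Complex.normSq_apply]
      ring
    simp_rw [this]
    rw [integral_const_mul, Nat.cast_choose_two]
    push_cast
    ring
  rw [show k + 1 - 1 = k from rfl] at h1 h2
  rw [Nat.cast_succ] at h1 h2
  set M := ∫ v, Complex.normSq (v i₀) ^ k * Complex.normSq (v i) ∂μ
  set m := ∫ v, Complex.normSq (v i₀) ^ (k + 1) ∂μ
  have hk : (0 : ℝ) < k + 1 := by positivity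
  have h4 : (2 * (k + 1 : ℝ)) * ((k + 1) * M) = (2 * (k + 1)) * m := by linarith
  exact mul_left_cancel₀ (by positivity) h4

/-- The recursion for the moments `m_k = E|v₀|^{2k}`, from summing the mixed moments over all
coordinates of `v`, whose squared moduli add up to one. -/
lemma moment_succ {d : ℕ} {μ : Measure (Fin d → ℂ)} (hμ : IsUniformSphereMeasure μ)
    (i₀ : Fin d) (k : ℕ) :
    (d + k) * ∫ v, Complex.normSq (v i₀) ^ (k + 1) ∂μ =
      (k + 1) * ∫ v, Complex.normSq (v i₀) ^ k ∂μ := by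
  have hint := integrable_of_continuous hμ
  have hc : ∀ j : Fin d, Continuous fun v : Fin d → ℂ => Complex.normSq (v j) := fun j =>
    Complex.continuous_normSq.comp (continuous_apply j)
  have h1 : ∫ v, Complex.normSq (v i₀) ^ k ∂μ =
      ∑ i, ∫ v, Complex.normSq (v i₀) ^ k * Complex.normSq (v i) ∂μ := by
    rw [← integral_finsetSum _ fun i _ => hint _ (by have := hc i; have := hc i₀; fun_prop)]
    refine integral_congr_ae ?_
    filter_upwards [ae_sphere hμ] with v hv
    rw [dot_self] at hv
    rw [← Finset.mul_sum, show ∑ i, Complex.normSq (v i) = 1 by exact_mod_cast hv, mul_one]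
  rw [h1, Finset.mul_sum, ← Finset.add_sum_erase _ _ (Finset.mem_univ i₀),
    Finset.sum_congr rfl fun i hi => integral_pow_mul_coord hμ (Finset.ne_of_mem_erase hi) k]
  have hd : 1 ≤ d := i₀.pos
  simp only [← pow_succ, Finset.sum_const, Finset.card_erase_of_mem (Finset.mem_univ i₀),
    Finset.card_univ, Fintype.card_fin, nsmul_eq_mul, Nat.cast_sub hd]
  push_cast
  ring

lemma moment_nonneg {d : ℕ} (μ : Measure (Fin d → ℂ)) (i₀ : Fin d) (k : ℕ) :
    0 ≤ ∫ v, Complex.normSq (v i₀) ^ k ∂μ :=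
  integral_nonneg fun _ => pow_nonneg (Complex.normSq_nonneg _) _

lemma moment_one {d : ℕ} {μ : Measure (Fin d → ℂ)} (hμ : IsUniformSphereMeasure μ)
    (i₀ : Fin d) : d * ∫ v, Complex.normSq (v i₀) ^ 1 ∂μ = 1 := by
  have := hμ.1
  simpa using moment_succ hμ i₀ 0

lemma moment_bound {d : ℕ} {μ : Measure (Fin d → ℂ)} (hμ : IsUniformSphereMeasure μ)
    (i₀ : Fin d) (k : ℕ) :
    d * (d + 1) ^ k * ∫ v, Complex.normSq (v i₀) ^ (k + 1) ∂μ ≤ ((k + 1).factorial : ℝ) := by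
  induction k with
  | zero => simpa using (moment_one hμ i₀).le
  | succ k ih =>
    have h := moment_succ hμ i₀ (k + 1)
    have h0 := moment_nonneg μ i₀ (k + 1 + 1)
    rw [Nat.factorial_succ (k + 1)]
    push_cast at h ⊢
    set m := ∫ v, Complex.normSq (v i₀) ^ (k + 1) ∂μ
    set m' := ∫ v, Complex.normSq (v i₀) ^ (k + 1 + 1) ∂μ
    calc (d : ℝ) * (d + 1) ^ (k + 1) * m' = d * (d + 1) ^ k * ((d + 1) * m') := by ring
      _ ≤ d * (d + 1) ^ k * ((d + (k + 1)) * m') := by gcongr; linarith [k.cast_nonneg (α := ℝ)]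
      _ = (k + 1 + 1) * (d * (d + 1) ^ k * m) := by rw [h]; ring
      _ ≤ _ := by gcongr

/-- Writing `ρ = Bᴴ B` turns `⟨v|ρ|v⟩` into a sum of `|⟨b_j, v⟩|²` with total weight `tr ρ = 1`. -/
lemma exists_factor {d : ℕ} {ρ : Matrix (Fin d) (Fin d) ℂ} (hρ : ρ.PosSemidef ∧ ρ.trace = 1) :
    ∃ b : Fin d → Fin d → ℂ, (∑ j, ∑ i, Complex.normSq (b j i) = 1) ∧
      ∀ v, (star v ⬝ᵥ ρ.mulVec v).re = ∑ j, Complex.normSq (star (b j) ⬝ᵥ v) := by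
  obtain ⟨B, hB⟩ : ∃ B : Matrix (Fin d) (Fin d) ℂ, ρ = Bᴴ * B := by
    open scoped MatrixOrder Matrix.Norms.L2Operator in
    exact CStarAlgebra.nonneg_iff_eq_star_mul_self.mp hρ.1.nonneg
  refine ⟨fun j => star (B j), ?_, fun v => ?_⟩
  · have h := hρ.2
    have h2 : ρ.trace = ((∑ j, ∑ i, Complex.normSq (star (B j) i) : ℝ) : ℂ) := by
      rw [hB, Finset.sum_comm]
      simp [Matrix.trace, Matrix.mul_apply, Complex.normSq_eq_conj_mul_self, Complex.normSq_conj]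
    rw [h2] at h
    exact_mod_cast h
  · rw [hB, ← Matrix.mulVec_mulVec, Matrix.dotProduct_mulVec, ← Matrix.star_mulVec, dot_self,
      Complex.ofReal_re]
    simp [Matrix.mulVec]

lemma pow_mul_le {x y : ℝ} (hx : 0 ≤ x) (hy : 0 ≤ y) (k : ℕ) :
    x ^ k * y ≤ x ^ (k + 1) + y ^ (k + 1) := by
  rcases le_total x y with h | h
  · have : x ^ k * y ≤ y ^ k * y := by gcongr
    rw [pow_succ y]; linarith [pow_nonneg hx (k + 1)]
  · have : x ^ k * y ≤ x ^ k * x := by gcongr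
    rw [pow_succ x]; linarith [pow_nonneg hy (k + 1)]

lemma continuous_normSq_dot {d : ℕ} (u : Fin d → ℂ) :
    Continuous fun v : Fin d → ℂ => Complex.normSq (star u ⬝ᵥ v) :=
  Complex.continuous_normSq.comp (by fun_prop)

/-- The case `b` of unit norm is `xᵏ y ≤ xᵏ⁺¹ + yᵏ⁺¹`; the general case follows by scaling `y` by
`‖b‖²`. -/
lemma mixed_moment_le {d : ℕ} {μ : Measure (Fin d → ℂ)} (hμ : IsUniformSphereMeasure μ)
    (i₀ : Fin d) (k : ℕ) (z b : Fin d → ℂ) (hz : ∑ i, Complex.normSq (z i) = 1) :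
    ∫ v, Complex.normSq (star z ⬝ᵥ v) ^ k * Complex.normSq (star b ⬝ᵥ v) ∂μ ≤
      2 * (∑ i, Complex.normSq (b i)) * ∫ v, Complex.normSq (v i₀) ^ (k + 1) ∂μ := by
  have hint := integrable_of_continuous hμ
  set N := ∑ i, Complex.normSq (b i) with hN
  have hN0 : 0 ≤ N := Finset.sum_nonneg fun i _ => Complex.normSq_nonneg _
  have hcz := continuous_normSq_dot z
  have hcb := continuous_normSq_dot b
  rcases hN0.eq_or_lt with h0 | hpos
  · have hb : b = 0 := by
      funext i
      have := (Finset.sum_eq_zero_iff_of_nonneg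
        (fun i _ => Complex.normSq_nonneg (b i))).1 (hN.symm.trans h0.symm) i (Finset.mem_univ i)
      simpa using this
    rw [← h0, hb]
    simp
  · have hle : ∀ v, Complex.normSq (star z ⬝ᵥ v) ^ k * Complex.normSq (star b ⬝ᵥ v) ≤
        N * Complex.normSq (star z ⬝ᵥ v) ^ (k + 1) +
          (N ^ k)⁻¹ * Complex.normSq (star b ⬝ᵥ v) ^ (k + 1) := by
      intro v
      have h := mul_le_mul_of_nonneg_left (pow_mul_le (Complex.normSq_nonneg (star z ⬝ᵥ v))
        (div_nonneg (Complex.normSq_nonneg (star b ⬝ᵥ v)) hN0) k) hN0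
      have e1 : N * (Complex.normSq (star z ⬝ᵥ v) ^ k * (Complex.normSq (star b ⬝ᵥ v) / N)) =
        Complex.normSq (star z ⬝ᵥ v) ^ k * Complex.normSq (star b ⬝ᵥ v) := by field_simp
      have e2 : N * (Complex.normSq (star b ⬝ᵥ v) / N) ^ (k + 1) =
          (N ^ k)⁻¹ * Complex.normSq (star b ⬝ᵥ v) ^ (k + 1) := by
        rw [div_pow]; field_simp; ring
      rw [e1, mul_add, e2] at h
      exact h
    refine (integral_mono (hint _ (by fun_prop)) (hint _ (by fun_prop)) hle).trans ?_
    rw [integral_add (hint _ (by fun_prop)) (hint _ (by fun_prop)), integral_const_mul,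
      integral_const_mul, moment_dot hμ i₀, moment_dot hμ i₀, hz, ← hN]
    apply le_of_eq
    field_simp
    ring

/-! ### The Born distribution -/

lemma born_integral {d : ℕ} {μ : Measure (Fin d → ℂ)} {ρ : Matrix (Fin d) (Fin d) ℂ}
    (hρ : ρ.PosSemidef ∧ ρ.trace = 1) (f : (Fin d → ℂ) → ℝ) :
    ∫ v, f v ∂(uniformBorn μ ρ) = ∫ v, (d * (star v ⬝ᵥ ρ.mulVec v).re) * f v ∂μ := by
  obtain ⟨b, -, hb⟩ := exists_factor hρ
  rw [uniformBorn, integral_withDensity_eq_integral_toReal_smul]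
  · refine integral_congr_ae (Filter.Eventually.of_forall fun v => ?_)
    simp only [smul_eq_mul]
    rw [ENNReal.toReal_ofReal]
    rw [hb]
    exact mul_nonneg d.cast_nonneg (Finset.sum_nonneg fun i _ => Complex.normSq_nonneg _)
  · exact (Continuous.measurable (by fun_prop)).ennreal_ofReal
  · exact Filter.Eventually.of_forall fun v => ENNReal.ofReal_lt_top

/-- Under the Born distribution, `(d+1)|⟨z, v⟩|²` has the moments of a sub-exponential variable,
with bounds that do not depend on the dimension. -/
lemma born_moment_le {d : ℕ} {μ : Measure (Fin d → ℂ)} (hμ : IsUniformSphereMeasure μ)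
    {ρ : Matrix (Fin d) (Fin d) ℂ} (hρ : ρ.PosSemidef ∧ ρ.trace = 1) (hd : 0 < d)
    (z : Fin d → ℂ) (hz : ∑ i, Complex.normSq (z i) = 1) (k : ℕ) :
    ∫ v, ((d + 1) * Complex.normSq (star z ⬝ᵥ v)) ^ k ∂(uniformBorn μ ρ) ≤
      2 * ((k + 1).factorial : ℝ) := by
  have hint := integrable_of_continuous hμ
  obtain ⟨b, hb1, hb⟩ := exists_factor hρ
  have hcz := continuous_normSq_dot z
  have hcb := fun j => continuous_normSq_dot (b j)
  rw [born_integral hρ]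
  have : ∀ v, (d * (star v ⬝ᵥ ρ.mulVec v).re) * ((d + 1) * Complex.normSq (star z ⬝ᵥ v)) ^ k =
      (d * (d + 1) ^ k) * ∑ j, Complex.normSq (star z ⬝ᵥ v) ^ k *
        Complex.normSq (star (b j) ⬝ᵥ v) := by
    intro v
    rw [hb, ← Finset.mul_sum, mul_pow]; ring
  simp_rw [this]
  rw [integral_const_mul, integral_finsetSum _ fun j _ => hint _ (by have := hcb j; fun_prop)]
  have hle : ∑ j, ∫ v, Complex.normSq (star z ⬝ᵥ v) ^ k *
      Complex.normSq (star (b j) ⬝ᵥ v) ∂μ ≤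
      2 * ∫ v, Complex.normSq (v ⟨0, hd⟩) ^ (k + 1) ∂μ := by
    refine (Finset.sum_le_sum fun j _ => mixed_moment_le hμ ⟨0, hd⟩ k z (b j) hz).trans ?_
    rw [← Finset.sum_mul, ← Finset.mul_sum, hb1, mul_one]
  calc _ ≤ (d * (d + 1) ^ k : ℝ) * (2 * ∫ v, Complex.normSq (v ⟨0, hd⟩) ^ (k + 1) ∂μ) := by gcongr
    _ = 2 * (d * (d + 1) ^ k * ∫ v, Complex.normSq (v ⟨0, hd⟩) ^ (k + 1) ∂μ) := by ring
    _ ≤ _ := by gcongr; exact moment_bound hμ _ k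

lemma born_isProbability {d : ℕ} {μ : Measure (Fin d → ℂ)} (hμ : IsUniformSphereMeasure μ)
    {ρ : Matrix (Fin d) (Fin d) ℂ} (hρ : ρ.PosSemidef ∧ ρ.trace = 1) (hd : 0 < d) :
    IsProbabilityMeasure (uniformBorn μ ρ) := by
  obtain ⟨b, hb1, hb⟩ := exists_factor hρ
  have hint := integrable_of_continuous hμ
  have hcb := fun j => continuous_normSq_dot (b j)
  constructor
  rw [uniformBorn, withDensity_apply _ MeasurableSet.univ, Measure.restrict_univ,
    ← ofReal_integral_eq_lintegral_ofReal (hint _ (by fun_prop))]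
  · rw [integral_const_mul]
    simp_rw [hb]
    rw [integral_finsetSum _ fun j _ => hint _ (hcb j)]
    have : ∀ j, ∫ v, Complex.normSq (star (b j) ⬝ᵥ v) ∂μ =
        (∑ i, Complex.normSq (b j i)) * ∫ v, Complex.normSq (v ⟨0, hd⟩) ^ 1 ∂μ := by
      intro j
      simpa using moment_dot hμ ⟨0, hd⟩ 1 (b j)
    simp_rw [this]
    rw [← Finset.sum_mul, hb1, one_mul, moment_one hμ]
    simp
  · refine Filter.Eventually.of_forall fun v => ?_
    simp only [hb, Pi.zero_apply]
    exact mul_nonneg d.cast_nonneg (Finset.sum_nonneg fun i _ => Complex.normSq_nonneg _)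

lemma born_integrable {d : ℕ} {μ : Measure (Fin d → ℂ)} (hμ : IsUniformSphereMeasure μ)
    (ρ : Matrix (Fin d) (Fin d) ℂ) {f : (Fin d → ℂ) → ℝ} (hf : Continuous f) :
    Integrable f (uniformBorn μ ρ) := by
  rw [uniformBorn, integrable_withDensity_iff_integrable_smul']
  · refine integrable_of_continuous hμ _ ?_
    simp only [ENNReal.toReal_ofReal', smul_eq_mul]
    fun_prop
  · exact (Continuous.measurable (by fun_prop)).ennreal_ofReal
  · exact Filter.Eventually.of_forall fun v => ENNReal.ofReal_lt_top

/-! ### Exponential moments and the Chernoff bound -/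

/-- A nonnegative variable with `E Wᵏ ≤ 2 (k+1)!` has a sub-gaussian centred moment generating
function near zero: expanding the exponential, the terms of order at least two are dominated by the
geometric series `2 (2|r|)ᵏ`, since `k + 1 ≤ 2ᵏ`. -/
lemma centered_mgf_le {Ω : Type*} [MeasurableSpace Ω] {ν : Measure Ω} [IsProbabilityMeasure ν]
    {W : Ω → ℝ} (h0 : ∀ v, 0 ≤ W v) (hint : ∀ k, Integrable (fun v => W v ^ k) ν)
    (hmom : ∀ k, ∫ v, W v ^ k ∂ν ≤ 2 * ((k + 1).factorial : ℝ))
    {r : ℝ} (hr : |r| ≤ 1 / 4) :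
    ∫ v, Real.exp (r * (W v - ∫ w, W w ∂ν)) ∂ν ≤ Real.exp (16 * r ^ 2) := by
  have term : ∀ k : ℕ, |r| ^ k / k.factorial * ∫ v, W v ^ k ∂ν ≤ 2 * (2 * |r|) ^ k := by
    intro k
    have hk : ((k + 1 : ℕ) : ℝ) ≤ 2 ^ k := by exact_mod_cast k.lt_two_pow_self
    calc |r| ^ k / k.factorial * ∫ v, W v ^ k ∂ν
        ≤ |r| ^ k / k.factorial * (2 * ((k + 1).factorial : ℝ)) := by
          gcongr; exact hmom k
      _ = 2 * (((k + 1 : ℕ) : ℝ) * |r| ^ k) := by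
          rw [Nat.factorial_succ]; push_cast; field_simp
      _ ≤ 2 * (2 ^ k * |r| ^ k) := by gcongr
      _ = _ := by rw [mul_pow]
  have hgeo : Summable fun k : ℕ => 2 * (2 * |r|) ^ k :=
    (summable_geometric_of_lt_one (by positivity) (by linarith)).mul_left 2
  have hsum : HasSum (fun k : ℕ => r ^ k / k.factorial * ∫ v, W v ^ k ∂ν)
      (∫ v, Real.exp (r * W v) ∂ν) := by
    have h := hasSum_integral_of_summable_integral_norm (μ := ν)
      (F := fun (k : ℕ) v => r ^ k / k.factorial * W v ^ k)
      (fun k => (hint k).const_mul _) ?_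
    · have h3 : ∫ v, Real.exp (r * W v) ∂ν =
          ∫ v, ∑' k : ℕ, r ^ k / k.factorial * W v ^ k ∂ν := by
        refine integral_congr_ae (Filter.Eventually.of_forall fun v => ?_)
        have := (NormedSpace.expSeries_div_hasSum_exp (r * W v)).tsum_eq
        simp only [Real.exp_eq_exp_ℝ, ← this]
        refine tsum_congr fun k => ?_
        rw [mul_pow]; ring
      rw [h3]
      simpa only [integral_const_mul] using h
    · refine Summable.of_nonneg_of_le (fun k => integral_nonneg fun v => norm_nonneg _)
        (fun k => ?_) hgeo
      have : ∀ v, ‖r ^ k / k.factorial * W v ^ k‖ = |r| ^ k / k.factorial * W v ^ k := by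
        intro v
        rw [Real.norm_eq_abs, abs_mul, abs_div, abs_pow, abs_of_nonneg (pow_nonneg (h0 v) k),
          Nat.abs_cast]
      simp_rw [this]
      rw [integral_const_mul]
      exact term k
  set m := ∫ w, W w ∂ν with hm
  have h2 := (hasSum_nat_add_iff' 2).2 hsum
  have hg2 : HasSum (fun k : ℕ => 2 * (2 * |r|) ^ (k + 2))
      (8 * r ^ 2 * (1 - 2 * |r|)⁻¹) := by
    have h := (hasSum_geometric_of_lt_one (r := 2 * |r|) (by positivity) (by linarith)).mul_left
      (8 * r ^ 2)
    have he : (fun k : ℕ => 2 * (2 * |r|) ^ (k + 2)) = fun k => 8 * r ^ 2 * (2 * |r|) ^ k := by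
      funext k
      rw [pow_add, ← sq_abs r]; ring
    rwa [he]
  have hle := hasSum_le (fun k => ?_) h2 hg2
  · have hb : ∫ v, Real.exp (r * W v) ∂ν ≤ 1 + r * m + 16 * r ^ 2 := by
      have hinv : (1 - 2 * |r|)⁻¹ ≤ 2 := by
        rw [inv_le_comm₀ (by linarith) (by norm_num)]; linarith
      have h3 : 8 * r ^ 2 * (1 - 2 * |r|)⁻¹ ≤ 8 * r ^ 2 * 2 := by gcongr
      simp [Finset.sum_range_succ] at hle
      rw [← hm] at hle
      linarith
    have : ∀ v, Real.exp (r * (W v - m)) = Real.exp (-(r * m)) * Real.exp (r * W v) := by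
      intro v; rw [← Real.exp_add]; congr 1; ring
    simp_rw [this]
    rw [integral_const_mul]
    calc Real.exp (-(r * m)) * ∫ v, Real.exp (r * W v) ∂ν
        ≤ Real.exp (-(r * m)) * Real.exp (r * m + 16 * r ^ 2) := by
          gcongr
          linarith [Real.add_one_le_exp (r * m + 16 * r ^ 2)]
      _ = _ := by rw [← Real.exp_add]; congr 1; ring
  · refine le_trans ?_ (term (k + 2))
    have : 0 ≤ ∫ v, W v ^ (k + 2) ∂ν := integral_nonneg fun v => pow_nonneg (h0 v) _
    gcongr ?_ / _ * _
    rw [← abs_pow]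
    exact le_abs_self _

/-- Chernoff bound for `n` independent copies with parameter `t / 32`, which minimizes
`16 r² - r t`; the exponent it gives, `-n t² / 64`, is stronger than the one stated. -/
lemma pi_tail {Ω : Type*} [MeasurableSpace Ω] {ν : Measure Ω} [IsProbabilityMeasure ν]
    {Z : Ω → ℝ} {t : ℝ} (ht : 0 ≤ t) (n : ℕ)
    (hint : Integrable (fun v => Real.exp (t / 32 * Z v)) ν)
    (hmgf : ∫ v, Real.exp (t / 32 * Z v) ∂ν ≤ Real.exp (16 * (t / 32) ^ 2)) :
    (Measure.pi fun _ : Fin n => ν).real {ω | n * t ≤ ∑ i, Z (ω i)} ≤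
      Real.exp (-(n * t ^ 2) / 120) := by
  have he : ∀ ω : Fin n → Ω, Real.exp (t / 32 * ∑ i, Z (ω i)) =
      ∏ i, Real.exp (t / 32 * Z (ω i)) := by
    intro ω; rw [Finset.mul_sum, Real.exp_sum]
  have h := ProbabilityTheory.measure_ge_le_exp_mul_mgf (μ := Measure.pi fun _ : Fin n => ν)
    (X := fun ω => ∑ i, Z (ω i)) (t := t / 32) (n * t) (by positivity) ?_
  · refine h.trans ?_
    rw [ProbabilityTheory.mgf]
    simp_rw [he]
    rw [integral_fintype_prod_eq_prod (f := fun (_ : Fin n) v => Real.exp (t / 32 * Z v)),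
      Finset.prod_const, Finset.card_univ, Fintype.card_fin]
    calc _ ≤ Real.exp (-(t / 32) * (n * t)) * Real.exp (16 * (t / 32) ^ 2) ^ n := by
          gcongr
      _ = Real.exp (-(n * t ^ 2) / 64) := by
          rw [← Real.exp_nat_mul, ← Real.exp_add]; congr 1; ring
      _ ≤ _ := by
          apply Real.exp_le_exp.2
          have : 0 ≤ n * t ^ 2 := by positivity
          linarith
  · simp_rw [he]
    exact Integrable.fintype_prod fun _ => hint

lemma uniformX_quadratic {d : ℕ} (z v : Fin d → ℂ) (hz : star z ⬝ᵥ z = 1) :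
    (star z ⬝ᵥ (uniformX v).mulVec z).re = (d + 1) * Complex.normSq (star z ⬝ᵥ v) - 1 := by
  have h : star v ⬝ᵥ z = star (star z ⬝ᵥ v) := by
    rw [star_dotProduct]
  have h2 : star z ⬝ᵥ (uniformX v).mulVec z =
      (((d + 1) * Complex.normSq (star z ⬝ᵥ v) - 1 : ℝ) : ℂ) := by
    rw [uniformX, projOp, Matrix.sub_mulVec, Matrix.smul_mulVec, Matrix.vecMulVec_mulVec,
      Matrix.one_mulVec, dotProduct_sub, hz, dotProduct_smul, dotProduct_smul, h]
    push_cast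
    rw [Complex.normSq_eq_conj_mul_self]
    simp [mul_comm]
  rw [h2, Complex.ofReal_re]

/-- exponential concentration of the empirical average of
`⟨z|X_i − E[X_i]|z⟩` for `n` i.i.d. uniform-POVM samples
(Corollary 3 of the appendix). -/
theorem uniformPOVM_scalar_concentration {d n : ℕ} (hd : 0 < d) (hn : 0 < n)
    (ρ : Matrix (Fin d) (Fin d) ℂ) (hρ : ρ.PosSemidef ∧ ρ.trace = 1)
    (μ : Measure (Fin d → ℂ)) (hμ : IsUniformSphereMeasure μ)
    (z : Fin d → ℂ) (hz : star z ⬝ᵥ z = 1)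
    (t : ℝ) (ht : t ∈ Set.Icc (0 : ℝ) 1) :
    (Measure.pi fun _ : Fin n => uniformBorn μ ρ)
        {ω | t ≤ |(n : ℝ)⁻¹ * ∑ i, ((star z ⬝ᵥ (uniformX (ω i)).mulVec z).re -
          ∫ w, (star z ⬝ᵥ (uniformX w).mulVec z).re ∂(uniformBorn μ ρ))|} ≤
      ENNReal.ofReal (2 * Real.exp (-(n * t ^ 2) / 120)) := by

  have hprob := born_isProbability hμ hρ hd
  set ν := uniformBorn μ ρ with hν
  obtain ⟨ht0, ht1⟩ := ht
  have hz' : ∑ i, Complex.normSq (z i) = 1 := by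
    rw [dot_self] at hz; exact_mod_cast hz
  let W : (Fin d → ℂ) → ℝ := fun v => (d + 1) * Complex.normSq (star z ⬝ᵥ v)
  have hWc : Continuous W := continuous_const.mul (continuous_normSq_dot z)
  have hW0 : ∀ v, 0 ≤ W v := fun v => mul_nonneg (by positivity) (Complex.normSq_nonneg _)
  have hint : ∀ f : (Fin d → ℂ) → ℝ, Continuous f → Integrable f ν :=
    fun f hf => born_integrable hμ ρ hf
  have hmgf : ∀ r : ℝ, |r| ≤ 1 / 4 →
      ∫ v, Real.exp (r * (W v - ∫ w, W w ∂ν)) ∂ν ≤ Real.exp (16 * r ^ 2) := fun r hr =>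
    centered_mgf_le hW0 (fun k => hint _ (hWc.pow k)) (born_moment_le hμ hρ hd z hz') hr
  have hsub : ∀ v, (star z ⬝ᵥ (uniformX v).mulVec z).re -
      ∫ w, (star z ⬝ᵥ (uniformX w).mulVec z).re ∂ν = W v - ∫ w, W w ∂ν := by
    intro v
    simp_rw [uniformX_quadratic z _ hz]
    rw [integral_sub (hint _ hWc) (integrable_const _)]
    simp [W]
  simp_rw [hsub]
  set m := ∫ w, W w ∂ν
  have hr : |t / 32| ≤ 1 / 4 := by rw [abs_of_nonneg (by positivity)]; linarith
  have hup := pi_tail (ν := ν) (Z := fun v => W v - m) ht0 n (hint _ (by fun_prop)) (hmgf _ hr)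
  have hlo := pi_tail (ν := ν) (Z := fun v => -(W v - m)) ht0 n (hint _ (by fun_prop)) (by
    have := hmgf (-(t / 32)) (by rwa [abs_neg])
    simpa only [neg_mul, mul_neg, neg_sq] using this)
  have hn' : (0 : ℝ) < n := by exact_mod_cast hn
  have hss : {ω : Fin n → Fin d → ℂ | t ≤ |(n : ℝ)⁻¹ * ∑ i, (W (ω i) - m)|} ⊆
      {ω | n * t ≤ ∑ i, (W (ω i) - m)} ∪ {ω | n * t ≤ ∑ i, -(W (ω i) - m)} := by
    intro ω hω
    simp only [Set.mem_ofPred_eq, Set.mem_union, Finset.sum_neg_distrib] at hω ⊢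
    rw [abs_mul, abs_of_pos (inv_pos.2 hn'), ← div_eq_inv_mul, le_div_iff₀ hn', mul_comm] at hω
    exact le_abs.1 hω
  rw [← ofReal_measureReal]
  apply ENNReal.ofReal_le_ofReal
  refine (measureReal_mono hss).trans ((measureReal_union_le _ _).trans ?_)
  linarith

end
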